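/- Minimal Lorentzian surfaces with flat normal bundle and nowhere-null second fundamental form lie in a Lorentzian hyperplane (Proposition 3.2, Case 2): in the setting of a minimal Lorentzian surface x(s,t) = α(s) + β(t) in null coordinates with I₁ × I₂ connected, suppose that at every point (s,t): η₁(s,t) ∧ η₂(s,t) = 0, B(η₁(s,t), η₁(s,t)) ≠ 0, and B(η₂(s,t), η₂(s,t)) ≠ 0. Then there exist a constant vector e₄ ∈ ℝ⁴ with B(e₄,e₄) > 0 and a constant c ∈ ℝ such that B(x(s,t), e₄) = c for all (s,t); that is, the surface is contained in a Lorentzian (i.e. space-like-normal) hyperplane of 𝔼⁴₁. -/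

import Mathlib

noncomputable section

/-- The Minkowski bilinear form on `ℝ⁴ = Fin 4 → ℝ`:
`B(v,w) = -v₀w₀ + v₁w₁ + v₂w₂ + v₃w₃`. -/
def B4 (v w : Fin 4 → ℝ) : ℝ :=
  -(v 0 * w 0) + v 1 * w 1 + v 2 * w 2 + v 3 * w 3

/-- The wedge product `v ∧ w`, modelled concretely as the antisymmetric array
`(i,j) ↦ vᵢwⱼ - vⱼwᵢ` (a faithful model of the second exterior power `Λ²(ℝ⁴)`). -/
def wedge (v w : Fin 4 → ℝ) : Fin 4 → Fin 4 → ℝ :=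
  fun i j => v i * w j - v j * w i

/-- Partial derivative of a two-parameter map with respect to the first variable. -/
def pds {E : Type*} [NormedAddCommGroup E] [NormedSpace ℝ E]
    (x : ℝ → ℝ → E) (s t : ℝ) : E :=
  deriv (fun u => x u t) s

/-- Partial derivative of a two-parameter map with respect to the second variable. -/
def pdt {E : Type*} [NormedAddCommGroup E] [NormedSpace ℝ E]
    (x : ℝ → ℝ → E) (s t : ℝ) : E :=
  deriv (fun u => x s u) t

/-- `m²(s,t) = -B(α'(s), β'(t))`, the conformal factor of the induced metric
`-m²(ds⊗dt + dt⊗ds)` of the minimal Lorentzian surface `x(s,t) = α(s) + β(t)`. -/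
def msq (α β : ℝ → Fin 4 → ℝ) (s t : ℝ) : ℝ :=
  -B4 (deriv α s) (deriv β t)

/-- `η₁ = h(∂s,∂s)`: the component of `x_{ss} = α''` orthogonal to the tangent
plane `span{α'(s), β'(t)}`. -/
def eta1 (α β : ℝ → Fin 4 → ℝ) (s t : ℝ) : Fin 4 → ℝ :=
  deriv (deriv α) s
    - (B4 (deriv (deriv α) s) (deriv β t) / B4 (deriv α s) (deriv β t)) • deriv α s

/-- `η₂ = h(∂t,∂t)`: the component of `x_{tt} = β''` orthogonal to the tangent
plane `span{α'(s), β'(t)}`. -/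
def eta2 (α β : ℝ → Fin 4 → ℝ) (s t : ℝ) : Fin 4 → ℝ :=
  deriv (deriv β) t
    - (B4 (deriv (deriv β) t) (deriv α s) / B4 (deriv α s) (deriv β t)) • deriv β t

/-- The Gauss map `ν = (1/m²)·(α'(s) ∧ β'(t))`, valued in (a model of) `Λ²(ℝ⁴)`. -/
def gaussMap (α β : ℝ → Fin 4 → ℝ) (s t : ℝ) : Fin 4 → Fin 4 → ℝ :=
  (1 / msq α β s t) • wedge (deriv α s) (deriv β t)

/-- The Laplace–Beltrami operator of the induced metric `-m²(ds⊗dt + dt⊗ds)`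
(with the sign convention of the paper) acting on `Λ²(ℝ⁴)`-valued maps:
`Δξ = (2/m²)·∂²ξ/∂s∂t`. -/
def lap (α β : ℝ → Fin 4 → ℝ) (ξ : ℝ → ℝ → (Fin 4 → Fin 4 → ℝ)) (s t : ℝ) :
    Fin 4 → Fin 4 → ℝ :=
  (2 / msq α β s t) • pds (pdt ξ) s t

/-!
Choose `e ≠ 0` orthogonal to `α'(s₀)`, `α''(s₀)` and `β'(t₀)`. Flatness along `s = s₀` makes
`η₂(s₀, t)` a multiple of `η₁(s₀, t)`, hence orthogonal to `e`. This says that `B(β'(t), e)` and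
`B(β'(t), α'(s₀))` satisfy the same first-order linear homogeneous equation in `t`; their ratio is
therefore constant, and it vanishes at `t₀`. So `β'` stays orthogonal to `e`, and by the symmetric
argument along `t = t₀` so does `α'`. Finally `e` is space-like, being orthogonal to a plane that
contains a time-like vector.
-/

section Calculus

lemma hasDerivAt_deriv_of_contDiffOn {𝕜 E : Type*} [NontriviallyNormedField 𝕜]
    [NormedAddCommGroup E] [NormedSpace 𝕜 E] {n : WithTop ℕ∞} {f : 𝕜 → E} {I : Set 𝕜} {x : 𝕜}
    (hf : ContDiffOn 𝕜 n f I) (hn : n ≠ 0) (hI : IsOpen I) (hx : x ∈ I) :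
    HasDerivAt f (deriv f x) x :=
  ((hf.differentiableOn hn).differentiableAt (hI.mem_nhds hx)).hasDerivAt

variable {𝕜 E : Type*} [RCLike 𝕜] [NormedAddCommGroup E] [NormedSpace 𝕜 E] {I : Set 𝕜} {x y : 𝕜}

lemma eq_of_hasDerivAt_zero {f : 𝕜 → E} (hI : IsOpen I) (hIc : IsPreconnected I)
    (hf : ∀ z ∈ I, HasDerivAt f 0 z) (hx : x ∈ I) (hy : y ∈ I) : f x = f y :=
  hI.is_const_of_deriv_eq_zero hIc
    (fun z hz => (hf z hz).differentiableAt.differentiableWithinAt)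
    (fun z hz => (hf z hz).deriv) hx hy

lemma apply_eq_of_apply_velocity_eq_zero {F : Type*} [NormedAddCommGroup F] [NormedSpace 𝕜 F]
    {f : E →L[𝕜] F} {γ γ' : 𝕜 → E} (hI : IsOpen I) (hIc : IsPreconnected I)
    (hγ : ∀ z ∈ I, HasDerivAt γ (γ' z) z) (hf : ∀ z ∈ I, f (γ' z) = 0) (hx : x ∈ I) (hy : y ∈ I) :
    f (γ x) = f (γ y) := by
  refine eq_of_hasDerivAt_zero (f := f ∘ γ) hI hIc (fun z hz => ?_) hx hy
  simpa only [hf z hz] using f.hasFDerivAt.comp_hasDerivAt z (hγ z hz)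

lemma div_eq_div_of_wronskian_eq_zero {f g f' g' : 𝕜 → 𝕜} (hI : IsOpen I)
    (hIc : IsPreconnected I) (hf : ∀ z ∈ I, HasDerivAt f (f' z) z)
    (hg : ∀ z ∈ I, HasDerivAt g (g' z) z) (hg0 : ∀ z ∈ I, g z ≠ 0)
    (hfg : ∀ z ∈ I, f' z * g z = f z * g' z) (hx : x ∈ I) (hy : y ∈ I) :
    f x / g x = f y / g y := by
  refine eq_of_hasDerivAt_zero (f := fun z => f z / g z) hI hIc (fun z hz => ?_) hx hy
  have hquot := (hf z hz).fun_div (hg z hz) (hg0 z hz)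
  rwa [hfg z hz, sub_self, zero_div] at hquot

end Calculus

lemma exists_ne_zero_forall_apply_eq_zero {R M ι : Type*} [Ring R] [StrongRankCondition R]
    [AddCommGroup M] [Module R M] [Fintype ι] (f : ι → M →ₗ[R] R)
    (h : (Fintype.card ι : Cardinal) < Module.rank R M) : ∃ v, v ≠ 0 ∧ ∀ i, f i v = 0 := by
  by_contra! hker
  have hinj : Function.Injective (LinearMap.pi f) := by
    rw [injective_iff_map_eq_zero]
    intro v hv
    by_contra hv0
    obtain ⟨i, hi⟩ := hker v hv0
    exact hi (congrFun hv i)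
  have hrank := LinearMap.lift_rank_le_of_injective _ hinj
  exact h.not_ge (by simpa using hrank)

section NormalPart

variable {V : Type*} [NormedAddCommGroup V] [NormedSpace ℝ V] {B : V →L[ℝ] V →L[ℝ] ℝ}

/-- The component of `v` orthogonal to the plane `span {a, b}`, for `a`, `b` null with `B a b ≠ 0`
and `v` orthogonal to `a`. Orthogonality to `a` is what removes the multiple of `b` that the
projection would otherwise subtract; second derivatives of null curves satisfy it. -/
def normalPart (B : V →L[ℝ] V →L[ℝ] ℝ) (v a b : V) : V :=
  v - (B v b / B a b) • a

lemma normalPart_eq_zero_iff {v a b : V} (hab : B a b ≠ 0) :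
    normalPart B v a b = 0 ↔ v ∈ ℝ ∙ a := by
  rw [normalPart, sub_eq_zero, Submodule.mem_span_singleton]
  constructor
  · exact fun hv => ⟨_, hv.symm⟩
  · rintro ⟨k, rfl⟩
    simp [hab]

lemma apply_eq_zero_of_apply_normalPart_eq_zero {I : Set ℝ} (hI : IsOpen I)
    (hIc : IsPreconnected I) {b b' : ℝ → V} (hb : ∀ t ∈ I, HasDerivAt b (b' t) t) {a : V}
    (hne : ∀ t ∈ I, B (b t) a ≠ 0) (f : V →L[ℝ] ℝ)
    (hf : ∀ t ∈ I, f (normalPart B (b' t) (b t) a) = 0) {t₀ t : ℝ} (ht₀ : t₀ ∈ I)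
    (hft₀ : f (b t₀) = 0) (ht : t ∈ I) : f (b t) = 0 := by
  have hwronskian : ∀ τ ∈ I, f (b' τ) * B.flip a (b τ) = f (b τ) * B.flip a (b' τ) := by
    intro τ hτ
    have hfτ := hf τ hτ
    have hneτ := hne τ hτ
    simp only [normalPart, map_sub, map_smul, smul_eq_mul, sub_eq_zero] at hfτ
    simp only [ContinuousLinearMap.flip_apply, hfτ]
    field_simp
  have hratio : f (b t) / B.flip a (b t) = f (b t₀) / B.flip a (b t₀) :=
    div_eq_div_of_wronskian_eq_zero hI hIc
      (fun τ hτ => f.hasFDerivAt.comp_hasDerivAt τ (hb τ hτ))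
      (fun τ hτ => (B.flip a).hasFDerivAt.comp_hasDerivAt τ (hb τ hτ)) hne hwronskian ht ht₀
  rw [hft₀, zero_div] at hratio
  exact (div_eq_zero_iff.mp hratio).resolve_right (hne t ht)

lemma apply_normalPart_eq_zero_of_not_linearIndependent {p q a b : V} (f : V →L[ℝ] ℝ)
    (hdep : ¬ LinearIndependent ℝ ![normalPart B p a b, normalPart B q b a])
    (hp : normalPart B p a b ≠ 0) (hfa : f a = 0) (hfp : f p = 0) :
    f (normalPart B q b a) = 0 := by
  rw [LinearIndependent.pair_iff' hp] at hdep
  push Not at hdep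
  obtain ⟨k, hk⟩ := hdep
  rw [← hk]
  simp [normalPart, hfa, hfp]

lemma apply_eq_zero_of_normalPart_not_linearIndependent (hB : ∀ v w, B v w = B w v)
    {I : Set ℝ} (hI : IsOpen I) (hIc : IsPreconnected I)
    {b b' : ℝ → V} (hb : ∀ t ∈ I, HasDerivAt b (b' t) t) {a p : V}
    (hne : ∀ t ∈ I, B a (b t) ≠ 0)
    (hflat : ∀ t ∈ I,
      ¬ LinearIndependent ℝ ![normalPart B p a (b t), normalPart B (b' t) (b t) a])
    (f : V →L[ℝ] ℝ) (hfa : f a = 0) (hfp : f p = 0) {t₀ t : ℝ} (ht₀ : t₀ ∈ I)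
    (hp : normalPart B p a (b t₀) ≠ 0) (hft₀ : f (b t₀) = 0) (ht : t ∈ I) : f (b t) = 0 := by
  -- Whether the normal part of `p` vanishes does not depend on `t`: it means `p ∈ ℝ ∙ a`.
  have hp' : ∀ τ ∈ I, normalPart B p a (b τ) ≠ 0 := fun τ hτ => by
    rwa [Ne, normalPart_eq_zero_iff (hne τ hτ), ← normalPart_eq_zero_iff (hne t₀ ht₀)]
  exact apply_eq_zero_of_apply_normalPart_eq_zero hI hIc hb
    (fun τ hτ => by rw [hB]; exact hne τ hτ) f
    (fun τ hτ =>
      apply_normalPart_eq_zero_of_not_linearIndependent f (hflat τ hτ) (hp' τ hτ) hfa hfp)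
    ht₀ hft₀ ht

end NormalPart

section Lorentzian

variable {V : Type*} [NormedAddCommGroup V] [NormedSpace ℝ V] {B : V →L[ℝ] V →L[ℝ] ℝ}

/-- Symmetric bilinear forms of index one (Lorentzian signature), encoded without a basis: there is
a time-like vector, and the form is positive definite on the orthogonal complement of every
time-like vector. -/
structure IsLorentzian (B : V →L[ℝ] V →L[ℝ] ℝ) : Prop where
  symm : ∀ v w, B v w = B w v
  exists_timelike : ∃ u, B u u < 0
  pos_of_orthogonal_timelike : ∀ u e, B u u < 0 → B u e = 0 → e ≠ 0 → 0 < B e e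

lemma IsLorentzian.pos_of_orthogonal_null_pair (hB : IsLorentzian B) {a b e : V} (ha : B a a = 0)
    (hb : B b b = 0) (hab : B a b ≠ 0) (hae : B a e = 0) (hbe : B b e = 0) (he : e ≠ 0) :
    0 < B e e := by
  refine hB.pos_of_orthogonal_timelike (a - B a b • b) e ?_ (by simp [hae, hbe]) he
  have hself : B (a - B a b • b) (a - B a b • b) = -(2 * B a b ^ 2) := by
    simp only [map_sub, map_smul, sub_apply, smul_apply, smul_eq_mul, ha, hb, hB.symm b a]
    ring
  rw [hself]
  have hsq : 0 < B a b ^ 2 := by positivity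
  linarith

theorem lies_in_lorentzian_hyperplane_general (hV : 3 < Module.rank ℝ V) (hB : IsLorentzian B)
    {I₁ I₂ : Set ℝ} (hI₁ : IsOpen I₁) (hI₂ : IsOpen I₂)
    (hI₁' : IsPreconnected I₁) (hI₂' : IsPreconnected I₂) {α α' α'' β β' β'' : ℝ → V}
    (hα : ∀ s ∈ I₁, HasDerivAt α (α' s) s) (hα' : ∀ s ∈ I₁, HasDerivAt α' (α'' s) s)
    (hβ : ∀ t ∈ I₂, HasDerivAt β (β' t) t) (hβ' : ∀ t ∈ I₂, HasDerivAt β' (β'' t) t)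
    (hαnull : ∀ s ∈ I₁, B (α' s) (α' s) = 0) (hβnull : ∀ t ∈ I₂, B (β' t) (β' t) = 0)
    (hne : ∀ s ∈ I₁, ∀ t ∈ I₂, B (α' s) (β' t) ≠ 0)
    (hflat : ∀ s ∈ I₁, ∀ t ∈ I₂, ¬ LinearIndependent ℝ
      ![normalPart B (α'' s) (α' s) (β' t), normalPart B (β'' t) (β' t) (α' s)])
    {s₀ t₀ : ℝ} (hs₀ : s₀ ∈ I₁) (ht₀ : t₀ ∈ I₂)
    (h1 : normalPart B (α'' s₀) (α' s₀) (β' t₀) ≠ 0)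
    (h2 : normalPart B (β'' t₀) (β' t₀) (α' s₀) ≠ 0) :
    ∃ (e₄ : V) (c : ℝ), 0 < B e₄ e₄ ∧ ∀ s ∈ I₁, ∀ t ∈ I₂, B (α s + β t) e₄ = c := by
  obtain ⟨e, he, hortho⟩ := exists_ne_zero_forall_apply_eq_zero
    ![(B (α' s₀)).toLinearMap, (B (α'' s₀)).toLinearMap, (B (β' t₀)).toLinearMap]
    (by simpa using hV)
  obtain ⟨ha, hp, hb⟩ : B (α' s₀) e = 0 ∧ B (α'' s₀) e = 0 ∧ B (β' t₀) e = 0 :=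
    ⟨hortho 0, hortho 1, hortho 2⟩
  have hq : B (β'' t₀) e = 0 := by
    have hnormal := apply_normalPart_eq_zero_of_not_linearIndependent (B.flip e)
      (hflat s₀ hs₀ t₀ ht₀) h1 ha hp
    simpa [normalPart, hb] using hnormal
  have hβe : ∀ t ∈ I₂, B.flip e (β' t) = 0 := fun t ht =>
    apply_eq_zero_of_normalPart_not_linearIndependent hB.symm hI₂ hI₂' hβ' (hne s₀ hs₀)
      (hflat s₀ hs₀) (B.flip e) ha hp ht₀ h1 hb ht
  have hαe : ∀ s ∈ I₁, B.flip e (α' s) = 0 := fun s hs =>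
    apply_eq_zero_of_normalPart_not_linearIndependent hB.symm hI₁ hI₁' hα'
      (fun σ hσ => by rw [hB.symm]; exact hne σ hσ t₀ ht₀)
      (fun σ hσ => by rw [LinearIndependent.pair_symm_iff]; exact hflat σ hσ t₀ ht₀)
      (B.flip e) hb hq hs₀ h2 ha hs
  refine ⟨e, B.flip e (α s₀) + B.flip e (β t₀), hB.pos_of_orthogonal_null_pair (hαnull s₀ hs₀)
    (hβnull t₀ ht₀) (hne s₀ hs₀ t₀ ht₀) ha hb he, fun s hs t ht => ?_⟩
  rw [← B.flip_apply, map_add,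
    apply_eq_of_apply_velocity_eq_zero hI₁ hI₁' hα hαe hs hs₀,
    apply_eq_of_apply_velocity_eq_zero hI₂ hI₂' hβ hβe ht ht₀]

end Lorentzian

section Minkowski

/-- The Minkowski form `B4` bundled as a continuous bilinear map, as `IsLorentzian` and `normalPart`
require. -/
def minkowskiForm : (Fin 4 → ℝ) →L[ℝ] (Fin 4 → ℝ) →L[ℝ] ℝ :=
  (LinearMap.mk₂ ℝ B4
    (fun _ _ _ => by simp only [B4, Pi.add_apply]; ring)
    (fun _ _ _ => by simp only [B4, Pi.smul_apply, smul_eq_mul]; ring)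
    (fun _ _ _ => by simp only [B4, Pi.add_apply]; ring)
    (fun _ _ _ => by simp only [B4, Pi.smul_apply, smul_eq_mul]; ring)).toContinuousBilinearMap

@[simp]
lemma minkowskiForm_apply (v w : Fin 4 → ℝ) : minkowskiForm v w = B4 v w :=
  rfl

lemma B4_comm (v w : Fin 4 → ℝ) : B4 v w = B4 w v := by
  simp only [B4]
  ring

lemma B4_eq_neg_mul_add_sum (v w : Fin 4 → ℝ) :
    B4 v w = -(v 0 * w 0) + ∑ i : Fin 3, v i.succ * w i.succ := by
  simp [B4, Fin.sum_univ_three, add_assoc]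

lemma B4_self_pos_of_orthogonal_timelike {u e : Fin 4 → ℝ} (hu : B4 u u < 0) (hue : B4 u e = 0)
    (he : e ≠ 0) : 0 < B4 e e := by
  simp only [B4_eq_neg_mul_add_sum, ← pow_two] at hu hue ⊢
  have hcauchy :
      (u 0 * e 0) ^ 2 ≤ (∑ i : Fin 3, u i.succ ^ 2) * ∑ i : Fin 3, e i.succ ^ 2 := by
    rw [neg_add_eq_zero.mp hue]
    exact Finset.sum_mul_sq_le_sq_mul_sq _ _ _
  have hu0 : 0 < u 0 ^ 2 := by
    have : 0 ≤ ∑ i : Fin 3, u i.succ ^ 2 := by positivity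
    linarith
  have hespace : 0 < ∑ i : Fin 3, e i.succ ^ 2 := by
    refine (Finset.sum_nonneg fun _ _ => sq_nonneg _).lt_of_ne' fun hzero => he ?_
    have hsucc : ∀ i : Fin 3, e i.succ = 0 := by
      simpa [Finset.sum_eq_zero_iff_of_nonneg, sq_nonneg] using hzero
    have he0 : e 0 = 0 := by
      rw [hzero, mul_zero] at hcauchy
      exact (mul_eq_zero.mp (sq_nonpos_iff _ |>.mp hcauchy)).resolve_left (sq_pos_iff.mp hu0)
    exact funext (Fin.cases he0 hsucc)
  have hlt : u 0 ^ 2 * e 0 ^ 2 < u 0 ^ 2 * ∑ i : Fin 3, e i.succ ^ 2 := by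
    rw [← mul_pow]
    exact hcauchy.trans_lt (mul_lt_mul_of_pos_right (by linarith) hespace)
  linarith [lt_of_mul_lt_mul_left hlt hu0.le]

lemma isLorentzian_minkowskiForm : IsLorentzian minkowskiForm where
  symm := B4_comm
  exists_timelike := ⟨![1, 0, 0, 0], by simp [B4]⟩
  pos_of_orthogonal_timelike _ _ := B4_self_pos_of_orthogonal_timelike

lemma not_linearIndependent_of_wedge_eq_zero {v w : Fin 4 → ℝ} (h : wedge v w = 0) :
    ¬ LinearIndependent ℝ ![v, w] := by
  intro hind
  refine hind.ne_zero 0 (funext fun i => ?_)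
  have hrel : -w i • v + v i • w = 0 := by
    ext j
    have hij : v i * w j - v j * w i = 0 := congrFun (congrFun h i) j
    simp only [Pi.add_apply, Pi.smul_apply, Pi.zero_apply, smul_eq_mul]
    linarith
  exact (LinearIndependent.pair_iff.mp hind _ _ hrel).2

lemma eta1_eq_normalPart (α β : ℝ → Fin 4 → ℝ) (s t : ℝ) :
    eta1 α β s t = normalPart minkowskiForm (deriv (deriv α) s) (deriv α s) (deriv β t) :=
  rfl

lemma eta2_eq_normalPart (α β : ℝ → Fin 4 → ℝ) (s t : ℝ) :
    eta2 α β s t = normalPart minkowskiForm (deriv (deriv β) t) (deriv β t) (deriv α s) := by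
  rw [eta2, B4_comm (deriv α s)]
  rfl

lemma ne_zero_of_B4_self_ne_zero {v : Fin 4 → ℝ} (hv : B4 v v ≠ 0) : v ≠ 0 := by
  rintro rfl
  exact hv (by simp [B4])

end Minkowski

/-- Proposition 3.2, Case 2: a minimal Lorentzian surface in null coordinates with
flat normal bundle (`η₁ ∧ η₂ ≡ 0`) and nowhere-null second fundamental form
(`B(η₁,η₁) ≠ 0`, `B(η₂,η₂) ≠ 0`) lies in a Lorentzian (space-like-normal)
hyperplane of `𝔼⁴₁`. -/
theorem lies_in_lorentzian_hyperplane
    (I₁ I₂ : Set ℝ) (hI₁ : IsOpen I₁) (hI₂ : IsOpen I₂)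
    (hI₁' : I₁.OrdConnected) (hI₂' : I₂.OrdConnected)
    (α β : ℝ → Fin 4 → ℝ)
    (hα : ContDiffOn ℝ (⊤ : ℕ∞) α I₁) (hβ : ContDiffOn ℝ (⊤ : ℕ∞) β I₂)
    (hαnull : ∀ s ∈ I₁, B4 (deriv α s) (deriv α s) = 0)
    (hβnull : ∀ t ∈ I₂, B4 (deriv β t) (deriv β t) = 0)
    (hneg : ∀ s ∈ I₁, ∀ t ∈ I₂, B4 (deriv α s) (deriv β t) < 0)
    (hwedge : ∀ s ∈ I₁, ∀ t ∈ I₂, wedge (eta1 α β s t) (eta2 α β s t) = 0)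
    (h1 : ∀ s ∈ I₁, ∀ t ∈ I₂, B4 (eta1 α β s t) (eta1 α β s t) ≠ 0)
    (h2 : ∀ s ∈ I₁, ∀ t ∈ I₂, B4 (eta2 α β s t) (eta2 α β s t) ≠ 0) :
    ∃ (e₄ : Fin 4 → ℝ) (c : ℝ), 0 < B4 e₄ e₄ ∧
      ∀ s ∈ I₁, ∀ t ∈ I₂, B4 (α s + β t) e₄ = c := by
  rcases I₁.eq_empty_or_nonempty with rfl | ⟨s₀, hs₀⟩
  · exact ⟨![0, 1, 0, 0], 0, by simp [B4], by simp⟩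
  rcases I₂.eq_empty_or_nonempty with rfl | ⟨t₀, ht₀⟩
  · exact ⟨![0, 1, 0, 0], 0, by simp [B4], by simp⟩
  have hα' : ContDiffOn ℝ (⊤ : ℕ∞) (deriv α) I₁ := hα.deriv_of_isOpen hI₁ le_rfl
  have hβ' : ContDiffOn ℝ (⊤ : ℕ∞) (deriv β) I₂ := hβ.deriv_of_isOpen hI₂ le_rfl
  simp only [eta1_eq_normalPart, eta2_eq_normalPart] at hwedge h1 h2
  exact lies_in_lorentzian_hyperplane_general (by rw [rank_fin_fun]; norm_num)
    isLorentzian_minkowskiForm hI₁ hI₂ hI₁'.isPreconnected hI₂'.isPreconnected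
    (fun s hs => hasDerivAt_deriv_of_contDiffOn hα (by simp) hI₁ hs)
    (fun s hs => hasDerivAt_deriv_of_contDiffOn hα' (by simp) hI₁ hs)
    (fun t ht => hasDerivAt_deriv_of_contDiffOn hβ (by simp) hI₂ ht)
    (fun t ht => hasDerivAt_deriv_of_contDiffOn hβ' (by simp) hI₂ ht)
    hαnull hβnull (fun s hs t ht => (hneg s hs t ht).ne)
    (fun s hs t ht => not_linearIndependent_of_wedge_eq_zero (hwedge s hs t ht)) hs₀ ht₀
    (ne_zero_of_B4_self_ne_zero (h1 s₀ hs₀ t₀ ht₀)) (ne_zero_of_B4_self_ne_zero (h2 s₀ hs₀ t₀ ht₀))
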